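/- arXiv:2603.18563 — 2 statements merged into one kernel-verified Lean document; each statement's English description precedes it below -/
import Mathlib

section
/- Let (Ω, 𝒜, μ) be a probability space and 𝔉 : ℕ → sub-σ-algebras of 𝒜 a filtration (𝔉 s ⊆ 𝔉 (s+1) for all s). Let C ≥ 0 and let X : ℕ → Ω → ℝ be a sequence of random variables such that for every s: X s is 𝔉(s+1)-measurable and |X s ω| ≤ C for all ω. Suppose there exists κ > 0 such that μ-almost surely, liminf_{T→∞} (1/T) ∑_{s=0}^{T−1} μ[ X s | 𝔉 s ] ≥ κ. Then μ-almost surely, ∑_{s=0}^{T−1} X s ω → +∞ as T → ∞ (i.e., the partial sums tend to infinity). (Partial sums of a bounded adapted sequence whose conditional-mean Cesàro averages are eventually bounded below by a positive constant diverge to infinity almost surely.) -/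
open MeasureTheory Filter

/-!
The differences `D s = X s - μ[X s | F s]` form a square-integrable martingale difference sequence.
They are pairwise orthogonal, so the martingale `∑ s < n, D s / (s + 1)` is bounded in `L²` and
converges almost surely. Kronecker's lemma (for these weights, an Abel summation followed by the
Cesàro theorem) turns this into `(∑ s < n, D s) / n → 0`. Hence the averages of the `X s`, like
those of their conditional means, are eventually bounded below by a positive constant.
-/

open scoped Topology

theorem sum_range_eq_smul_sub_sum_range {E : Type*} [AddCommGroup E] [Module ℝ E]
    (x : ℕ → E) (n : ℕ) :
    ∑ s ∈ Finset.range n, x s =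
      (n : ℝ) • ∑ s ∈ Finset.range n, ((s : ℝ) + 1)⁻¹ • x s -
        ∑ k ∈ Finset.range n, ∑ s ∈ Finset.range k, ((s : ℝ) + 1)⁻¹ • x s := by
  induction n with
  | zero => simp
  | succ n ih =>
    have hn : (n : ℝ) + 1 ≠ 0 := by positivity
    simp only [Finset.sum_range_succ _ n, Nat.cast_succ]
    rw [ih, smul_add, smul_inv_smul₀ hn, add_smul, one_smul]
    abel

theorem tendsto_inv_smul_sum_zero_of_tendsto_sum_inv_smul {E : Type*} [NormedAddCommGroup E]
    [NormedSpace ℝ E] {x : ℕ → E} {l : E}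
    (h : Tendsto (fun n : ℕ => ∑ s ∈ Finset.range n, ((s : ℝ) + 1)⁻¹ • x s) atTop (𝓝 l)) :
    Tendsto (fun n : ℕ => (n : ℝ)⁻¹ • ∑ s ∈ Finset.range n, x s) atTop (𝓝 0) := by
  have hdiff := h.sub h.cesaro_smul
  rw [sub_self] at hdiff
  refine hdiff.congr' ?_
  filter_upwards [eventually_ne_atTop 0] with n hn
  rw [sum_range_eq_smul_sub_sum_range x n, smul_sub, inv_smul_smul₀ (Nat.cast_ne_zero.2 hn)]

theorem exists_pos_eventually_le_of_liminf_pos {ι : Type*} {f : Filter ι} {u : ι → ℝ}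
    (h : 0 < f.liminf u) : ∃ c > 0, ∀ᶠ i in f, c ≤ u i := by
  by_contra hnone
  refine h.not_ge ?_
  rw [liminf_eq]
  -- This also covers the junk value `sSup ∅ = 0`.
  exact Real.sSup_nonpos fun c hc => not_lt.1 fun hpos => hnone ⟨c, hpos, hc⟩

theorem tendsto_atTop_of_liminf_average_pos {S A : ℕ → ℝ}
    (hA : 0 < atTop.liminf fun n : ℕ => (1 / (n : ℝ)) * A n)
    (hSA : Tendsto (fun n : ℕ => (n : ℝ)⁻¹ * (S n - A n)) atTop (𝓝 0)) :
    Tendsto S atTop atTop := by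
  obtain ⟨c, hc, hcA⟩ := exists_pos_eventually_le_of_liminf_pos hA
  refine tendsto_atTop_mono' atTop ?_
    (tendsto_natCast_atTop_atTop.atTop_mul_const (half_pos hc))
  filter_upwards [hcA, hSA.eventually_const_le (neg_lt_zero.2 (half_pos hc)),
    eventually_gt_atTop 0] with n hAn hSAn hn
  have hn' : (0 : ℝ) < n := Nat.cast_pos.2 hn
  have havg : c / 2 ≤ (n : ℝ)⁻¹ * S n := by
    rw [one_div] at hAn
    linarith
  rwa [le_inv_mul_iff₀ hn'] at havg

section SecondMoments

variable {Ω : Type*} {m m0 : MeasurableSpace Ω} {μ : Measure Ω}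

theorem integral_sub_condExp_sq_le [IsFiniteMeasure μ] (hm : m ≤ m0) {X : Ω → ℝ}
    (hX : MemLp X 2 μ) : ∫ ω, (X ω - (μ[X | m]) ω) ^ 2 ∂μ ≤ ∫ ω, X ω ^ 2 ∂μ := by
  calc ∫ ω, (X ω - (μ[X | m]) ω) ^ 2 ∂μ
      = ∫ ω, (ProbabilityTheory.condVar m X μ) ω ∂μ := (integral_condExp hm).symm
    _ ≤ ∫ ω, (μ[X ^ 2 | m]) ω ∂μ :=
        integral_mono_ae ProbabilityTheory.integrable_condVar integrable_condExp
          (ProbabilityTheory.condVar_ae_le_condExp_sq hm hX)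
    _ = ∫ ω, X ω ^ 2 ∂μ := integral_condExp hm

theorem integral_mul_eq_zero_of_condExp_eq_zero (hm : m ≤ m0) [SigmaFinite (μ.trim hm)]
    {Y D : Ω → ℝ} (hY : StronglyMeasurable[m] Y) (hYD : Integrable (Y * D) μ)
    (hD : Integrable D μ) (hD0 : μ[D | m] =ᵐ[μ] 0) : ∫ ω, Y ω * D ω ∂μ = 0 := by
  have hpull : μ[Y * D | m] =ᵐ[μ] 0 := by
    filter_upwards [condExp_mul_of_stronglyMeasurable_left hY hYD hD, hD0] with ω hω hω0
    simp [hω, hω0]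
  calc ∫ ω, Y ω * D ω ∂μ = ∫ ω, (μ[Y * D | m]) ω ∂μ := (integral_condExp hm).symm
    _ = 0 := integral_eq_zero_of_ae hpull

theorem integral_add_sq_of_integral_mul_eq_zero {Y D : Ω → ℝ} (hY : MemLp Y 2 μ)
    (hD : MemLp D 2 μ) (hYD : ∫ ω, Y ω * D ω ∂μ = 0) :
    ∫ ω, (Y ω + D ω) ^ 2 ∂μ = ∫ ω, Y ω ^ 2 ∂μ + ∫ ω, D ω ^ 2 ∂μ := by
  have hcross : Integrable (fun ω => 2 * (Y ω * D ω)) μ := (hY.integrable_mul hD).const_mul 2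
  have hsum : Integrable (fun ω => Y ω ^ 2 + D ω ^ 2) μ := hY.integrable_sq.add hD.integrable_sq
  calc ∫ ω, (Y ω + D ω) ^ 2 ∂μ = ∫ ω, (Y ω ^ 2 + D ω ^ 2) + 2 * (Y ω * D ω) ∂μ := by
        congr 1 with ω
        ring
    _ = ∫ ω, Y ω ^ 2 ∂μ + ∫ ω, D ω ^ 2 ∂μ := by
        rw [integral_add hsum hcross, integral_add hY.integrable_sq hD.integrable_sq,
          integral_const_mul, hYD, mul_zero, add_zero]

theorem eLpNorm_one_le_of_integral_sq_le [IsFiniteMeasure μ] {f : Ω → ℝ} {R : ℝ}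
    (hf : MemLp f 2 μ) (hR : ∫ ω, f ω ^ 2 ∂μ ≤ R) :
    eLpNorm f 1 μ ≤ (R + μ.real Set.univ).toNNReal := by
  have hint : Integrable f μ := hf.integrable one_le_two
  have hnorm : ∫ ω, ‖f ω‖ ∂μ ≤ R + μ.real Set.univ := by
    calc ∫ ω, ‖f ω‖ ∂μ ≤ ∫ ω, (f ω ^ 2 + 1) ∂μ := by
          refine integral_mono hint.norm (hf.integrable_sq.add (integrable_const 1)) fun ω => ?_
          change |f ω| ≤ f ω ^ 2 + 1
          nlinarith [sq_nonneg (|f ω| - 1), sq_abs (f ω)]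
      _ = ∫ ω, f ω ^ 2 ∂μ + μ.real Set.univ := by
          rw [integral_add hf.integrable_sq (integrable_const 1)]
          simp
      _ ≤ R + μ.real Set.univ := by gcongr
  rw [eLpNorm_one_eq_lintegral_enorm, ← ofReal_integral_norm_eq_lintegral_enorm hint]
  exact ENNReal.ofReal_le_ofReal hnorm

end SecondMoments

section MartingaleDifference

variable {Ω E : Type*} {m0 : MeasurableSpace Ω} [NormedAddCommGroup E] [NormedSpace ℝ E]
  [CompleteSpace E]

/-- A martingale difference sequence: integrable increments with vanishing conditional mean given
the past. The increment `D s` is the step from time `s` to time `s + 1`, so it is measurable with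
respect to `F (s + 1)` and centred given `F s`. -/
structure IsMartingaleDifference (D : ℕ → Ω → E) (F : Filtration ℕ m0) (μ : Measure Ω) :
    Prop where
  stronglyMeasurable (s : ℕ) : StronglyMeasurable[F (s + 1)] (D s)
  integrable (s : ℕ) : Integrable (D s) μ
  condExp_eq_zero (s : ℕ) : μ[D s | F s] =ᵐ[μ] 0

variable {F : Filtration ℕ m0} {μ : Measure Ω}

theorem isMartingaleDifference_sub_condExp [SigmaFiniteFiltration μ F] {X : ℕ → Ω → E}
    (hmeas : ∀ s, StronglyMeasurable[F (s + 1)] (X s)) (hint : ∀ s, Integrable (X s) μ) :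
    IsMartingaleDifference (fun s => X s - μ[X s | F s]) F μ where
  stronglyMeasurable s :=
    (hmeas s).sub (stronglyMeasurable_condExp.mono (F.mono s.le_succ))
  integrable s := (hint s).sub integrable_condExp
  condExp_eq_zero s := by
    filter_upwards [condExp_sub (hint s) (integrable_condExp (m := F s) (f := X s)) (F s)]
      with ω hω
    rw [hω, condExp_of_stronglyMeasurable (F.le s) stronglyMeasurable_condExp integrable_condExp]
    simp

namespace IsMartingaleDifference

theorem smul_seq {D : ℕ → Ω → E} (hD : IsMartingaleDifference D F μ) (c : ℕ → ℝ) :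
    IsMartingaleDifference (fun s => c s • D s) F μ where
  stronglyMeasurable s := (hD.stronglyMeasurable s).const_smul (c s)
  integrable s := (hD.integrable s).smul (c s)
  condExp_eq_zero s := by
    filter_upwards [condExp_smul (c s) (D s) (F s), hD.condExp_eq_zero s] with ω hω hω0
    simp [hω, hω0]

theorem martingale_sum [IsFiniteMeasure μ] {D : ℕ → Ω → E}
    (hD : IsMartingaleDifference D F μ) :
    Martingale (fun n => ∑ s ∈ Finset.range n, D s) F μ := by
  refine martingale_of_condExp_sub_eq_zero_nat (fun n => ?_)
    (fun n => integrable_finsetSum' _ fun s _ => hD.integrable s) fun n => ?_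
  · exact Finset.stronglyMeasurable_sum _ fun s hs =>
      (hD.stronglyMeasurable s).mono (F.mono (Finset.mem_range.1 hs))
  · rw [Finset.sum_range_succ_sub_sum]
    exact hD.condExp_eq_zero n

variable [IsFiniteMeasure μ] {D : ℕ → Ω → ℝ}

theorem integral_sum_sq (hD : IsMartingaleDifference D F μ) (hL2 : ∀ s, MemLp (D s) 2 μ)
    (n : ℕ) :
    ∫ ω, (∑ s ∈ Finset.range n, D s) ω ^ 2 ∂μ = ∑ s ∈ Finset.range n, ∫ ω, D s ω ^ 2 ∂μ := by
  induction n with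
  | zero => simp
  | succ n ih =>
    have hsumL2 : MemLp (∑ s ∈ Finset.range n, D s) 2 μ := memLp_finsetSum' _ fun s _ => hL2 s
    have horth : ∫ ω, (∑ s ∈ Finset.range n, D s) ω * D n ω ∂μ = 0 :=
      integral_mul_eq_zero_of_condExp_eq_zero (F.le n) (hD.martingale_sum.stronglyMeasurable n)
        (hsumL2.integrable_mul (hL2 n)) (hD.integrable n) (hD.condExp_eq_zero n)
    rw [Finset.sum_range_succ, Finset.sum_range_succ, ← ih]
    exact integral_add_sq_of_integral_mul_eq_zero hsumL2 (hL2 n) horth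

theorem ae_exists_tendsto_sum (hD : IsMartingaleDifference D F μ) (hL2 : ∀ s, MemLp (D s) 2 μ)
    (hsum : Summable fun s => ∫ ω, D s ω ^ 2 ∂μ) :
    ∀ᵐ ω ∂μ, ∃ l, Tendsto (fun n => ∑ s ∈ Finset.range n, D s ω) atTop (𝓝 l) := by
  have hbdd (n : ℕ) :
      ∫ ω, (∑ s ∈ Finset.range n, D s) ω ^ 2 ∂μ ≤ ∑' s, ∫ ω, D s ω ^ 2 ∂μ := by
    rw [hD.integral_sum_sq hL2]
    exact hsum.sum_le_tsum _ fun s _ => integral_nonneg fun ω => sq_nonneg _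
  simpa only [Finset.sum_apply] using hD.martingale_sum.submartingale.exists_ae_tendsto_of_bdd
    fun n => eLpNorm_one_le_of_integral_sq_le (memLp_finsetSum' _ fun s _ => hL2 s) (hbdd n)

theorem strong_law_ae (hD : IsMartingaleDifference D F μ)
    (hL2 : ∀ s, MemLp (D s) 2 μ)
    (hsum : Summable fun s : ℕ => (∫ ω, D s ω ^ 2 ∂μ) / ((s : ℝ) + 1) ^ 2) :
    ∀ᵐ ω ∂μ, Tendsto (fun n : ℕ => (n : ℝ)⁻¹ * ∑ s ∈ Finset.range n, D s ω) atTop (𝓝 0) := by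
  have hsum' : Summable fun s : ℕ => ∫ ω, (((s : ℝ) + 1)⁻¹ • D s) ω ^ 2 ∂μ := by
    refine hsum.congr fun s => ?_
    simp only [Pi.smul_apply, smul_eq_mul, mul_pow, inv_pow, integral_const_mul]
    exact (inv_mul_eq_div _ _).symm
  filter_upwards [(hD.smul_seq fun s : ℕ => ((s : ℝ) + 1)⁻¹).ae_exists_tendsto_sum
    (fun s => (hL2 s).const_smul _) hsum'] with ω ⟨l, hl⟩
  exact tendsto_inv_smul_sum_zero_of_tendsto_sum_inv_smul hl

end IsMartingaleDifference

end MartingaleDifference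

section AdaptedSums

variable {Ω : Type*} {m0 : MeasurableSpace Ω} {μ : Measure Ω} [IsFiniteMeasure μ]

theorem ae_tendsto_average_sub_condExp_zero {F : Filtration ℕ m0} {X : ℕ → Ω → ℝ}
    (hmeas : ∀ s, StronglyMeasurable[F (s + 1)] (X s)) (hL2 : ∀ s, MemLp (X s) 2 μ)
    (hsum : Summable fun s : ℕ => (∫ ω, X s ω ^ 2 ∂μ) / ((s : ℝ) + 1) ^ 2) :
    ∀ᵐ ω ∂μ, Tendsto
      (fun n : ℕ => (n : ℝ)⁻¹ * ∑ s ∈ Finset.range n, (X s ω - (μ[X s | F s]) ω))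
      atTop (𝓝 0) := by
  refine (isMartingaleDifference_sub_condExp hmeas
    fun s => (hL2 s).integrable one_le_two).strong_law_ae
      (fun s => (hL2 s).sub ((hL2 s).condExp one_le_two)) ?_
  refine hsum.of_nonneg_of_le (fun s => by positivity) fun s => ?_
  exact div_le_div_of_nonneg_right (integral_sub_condExp_sq_le (F.le s) (hL2 s)) (by positivity)

theorem summable_integral_sq_div_of_abs_le {C : ℝ} {X : ℕ → Ω → ℝ}
    (hbdd : ∀ s, ∀ᵐ ω ∂μ, |X s ω| ≤ C) :
    Summable fun s : ℕ => (∫ ω, X s ω ^ 2 ∂μ) / ((s : ℝ) + 1) ^ 2 := by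
  have hmoment (s : ℕ) : ∫ ω, X s ω ^ 2 ∂μ ≤ C ^ 2 * μ.real Set.univ := by
    refine (Real.le_norm_self _).trans (norm_integral_le_of_norm_le_const ?_)
    filter_upwards [hbdd s] with ω hω
    simpa using pow_le_pow_left₀ (abs_nonneg _) hω 2
  have hweights : Summable fun s : ℕ => C ^ 2 * μ.real Set.univ / ((s : ℝ) + 1) ^ 2 := by
    simpa [div_eq_mul_inv] using
      ((summable_nat_add_iff 1).2 (Real.summable_nat_pow_inv.2 one_lt_two)).mul_left
        (C ^ 2 * μ.real Set.univ)
  refine hweights.of_nonneg_of_le (fun s => by positivity) fun s => ?_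
  gcongr
  exact hmoment s

theorem bounded_adapted_partial_sums_tendsto_atTop_general {F : Filtration ℕ m0}
    {X : ℕ → Ω → ℝ} (hmeas : ∀ s, StronglyMeasurable[F (s + 1)] (X s))
    (hL2 : ∀ s, MemLp (X s) 2 μ)
    (hsum : Summable fun s : ℕ => (∫ ω, X s ω ^ 2 ∂μ) / ((s : ℝ) + 1) ^ 2)
    (hliminf : ∀ᵐ ω ∂μ,
      0 < atTop.liminf fun T : ℕ =>
        (1 / (T : ℝ)) * ∑ s ∈ Finset.range T, (μ[X s | F s]) ω) :
    ∀ᵐ ω ∂μ, Tendsto (fun T : ℕ => ∑ s ∈ Finset.range T, X s ω) atTop atTop := by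
  filter_upwards [hliminf, ae_tendsto_average_sub_condExp_zero hmeas hL2 hsum]
    with ω hpos haverage
  simp only [Finset.sum_sub_distrib] at haverage
  exact tendsto_atTop_of_liminf_average_pos hpos haverage

end AdaptedSums

/-- **Partial sums of a bounded adapted sequence whose conditional-mean Cesàro
averages are eventually bounded below by a positive constant diverge to `+∞`
almost surely.** -/
theorem bounded_adapted_partial_sums_tendsto_atTop {Ω : Type*} [m0 : MeasurableSpace Ω]
    (μ : Measure Ω) [IsProbabilityMeasure μ]
    (F : ℕ → MeasurableSpace Ω) (hF_le : ∀ s, F s ≤ m0) (hF_mono : ∀ s, F s ≤ F (s + 1))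
    (C : ℝ) (hC : 0 ≤ C) (X : ℕ → Ω → ℝ)
    (hmeas : ∀ s, Measurable[F (s + 1)] (X s))
    (hbdd : ∀ s ω, |X s ω| ≤ C)
    (κ : ℝ) (hκ : 0 < κ)
    (hliminf : ∀ᵐ ω ∂μ,
      κ ≤ atTop.liminf fun T : ℕ =>
        (1 / (T : ℝ)) * ∑ s ∈ Finset.range T, (μ[X s | F s]) ω) :
    ∀ᵐ ω ∂μ,
      Tendsto (fun T : ℕ => ∑ s ∈ Finset.range T, X s ω) atTop atTop :=
  bounded_adapted_partial_sums_tendsto_atTop_general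
    (F := ⟨F, monotone_nat_of_le_succ hF_mono, hF_le⟩) (fun s => (hmeas s).stronglyMeasurable)
    (fun s => .of_bound ((hmeas s).mono (hF_le _) le_rfl).aestronglyMeasurable C
      (ae_of_all _ (hbdd s)))
    (summable_integral_sq_div_of_abs_le fun s => ae_of_all _ (hbdd s))
    (hliminf.mono fun _ h => hκ.trans_le h)
end

section
/- In the finite-horizon repeated game setting [see context], fix the horizon T ≥ 1, the payoffs, the discount factors, and ψ > 0. Then for every θ > 0 there exists η̄ > 0 such that: whenever 0 ≤ η ≤ η̄ and the T-horizon strategy profile f is a finite-horizon weak ψ-subjective η-equilibrium, there exists a T-horizon strategy profile f̂ that is a ψ-Nash equilibrium of the T-period game and satisfies d_T(μ^{f̂}, μ^f) ≤ θ. (Finite-horizon robustness: weak subjective equilibria with sufficiently accurate beliefs are weakly close to exact approximate Nash equilibria of the T-period game; proved by a compactness and limit argument on the finite-dimensional product of simplices of T-horizon strategies.) -/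
open scoped BigOperators

/-- A probability vector on a finite set `S`. -/
def IsProbVec {S : Type*} [Fintype S] (p : S → ℝ) : Prop :=
  (∀ s, 0 ≤ p s) ∧ ∑ s, p s = 1

section FiniteHorizon

variable {I : Type*} [Fintype I] [DecidableEq I] [Nonempty I]
variable {A : I → Type*} [∀ i, Fintype (A i)] [∀ i, Nonempty (A i)]

/-- A (behavior) strategy profile: each player `i` assigns to every history
(a list of joint actions) a probability vector on its own action set. -/
abbrev Profile (I : Type*) (A : I → Type*) : Type _ :=
  ∀ i, List (∀ j, A j) → A i → ℝ

/-- Every prescription of the profile is a probability vector. -/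
def IsProfile (f : Profile I A) : Prop :=
  ∀ i h, IsProbVec (f i h)

/-- The history consisting of the first `t` joint actions of `w`. -/
def histPrefix {T : ℕ} (w : Fin T → ∀ j, A j) (t : Fin T) : List (∀ j, A j) :=
  List.ofFn fun s : Fin t.1 => w (Fin.castLE t.isLt.le s)

/-- The probability that the profile `f` generates the length-`T` play path `w`. -/
def pathProb (T : ℕ) (f : Profile I A) (w : Fin T → ∀ j, A j) : ℝ :=
  ∏ t : Fin T, ∏ i, f i (histPrefix w t) (w t i)

/-- The `T`-period (normalized) discounted payoff of player `i` under profile `f`. -/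
def UT (T : ℕ) (u : ∀ i : I, (∀ j, A j) → ℝ) (lam : I → ℝ) (i : I) (f : Profile I A) : ℝ :=
  ∑ w : Fin T → ∀ j, A j,
    pathProb T f w * ((1 - lam i) * ∑ t : Fin T, lam i ^ (t : ℕ) * u i (w t))

/-- An event `E ⊆ A^T` depends only on the first `t` coordinates. -/
def DependsOnFirst (T t : ℕ) (E : Set (Fin T → ∀ j, A j)) : Prop :=
  ∀ w w', (∀ s : Fin T, (s : ℕ) < t → w s = w' s) → (w ∈ E ↔ w' ∈ E)

/-- The truncated weak distance between two distributions on `A^T`: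
`d_T(P,Q) := ∑_{t=1}^T 2^{-t} ⋅ max { |P(E) - Q(E)| : E depends only on the first
`t` coordinates }`. -/
noncomputable def dT (T : ℕ) (P Q : (Fin T → ∀ j, A j) → ℝ) : ℝ :=
  ∑ t ∈ Finset.range T, (2 : ℝ)⁻¹ ^ (t + 1) *
    ⨆ E : {E : Set (Fin T → ∀ j, A j) // DependsOnFirst T (t + 1) E},
      |(∑ w, E.1.indicator P w) - ∑ w, E.1.indicator Q w|

/-- `f` is a `ψ`-Nash equilibrium of the `T`-period game. -/
def IsNashT (T : ℕ) (u : ∀ i : I, (∀ j, A j) → ℝ) (lam : I → ℝ) (ψ : ℝ)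
    (f : Profile I A) : Prop :=
  ∀ i (g : List (∀ j, A j) → A i → ℝ), (∀ h, IsProbVec (g h)) →
    UT T u lam i f ≥ UT T u lam i (Function.update f i g) - ψ

/-- `f` is a finite-horizon weak `ψ`-subjective `η`-equilibrium. -/
def IsWeakSubjT (T : ℕ) (u : ∀ i : I, (∀ j, A j) → ℝ) (lam : I → ℝ) (ψ η : ℝ)
    (f : Profile I A) : Prop :=
  ∀ i, ∃ f' : Profile I A, IsProfile f' ∧ f' i = f i ∧
    UT T u lam i f' ≥
      (⨆ g : {g : List (∀ j, A j) → A i → ℝ // ∀ h, IsProbVec (g h)},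
        UT T u lam i (Function.update f' i g.1)) - ψ ∧
    dT T (pathProb T f') (pathProb T f) ≤ η

/-!
Fix `θ` and consider the pairs of a profile `f` and a family `F` of beliefs, `F i` being a `ψ`-best
reply of player `i`, such that no `ψ`-Nash equilibrium is within `θ` of `f`. These pairs form a
compact set, as profiles are a product of simplices. On it the distance between what the beliefs
predict and what `f` generates is continuous, and it never vanishes; hence it is bounded below by a
positive number, and any smaller `ηbar` works.

It never vanishes for the following reason. If every `F i` generates the same distribution as `f`,
then all these profiles prescribe the same behaviour after histories of positive probability. Let
all players follow `f` until someone takes an action that `f` excludes and, if that was player `i`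
alone, follow `F i` from then on. This profile generates the same distribution as `f`, and a
unilateral deviation of player `i` earns against it exactly what it earns against `F i`, so it is a
`ψ`-Nash equilibrium at distance zero from `f`.
-/

section ProductMeasure

variable {ι : Type*} [Fintype ι] {S : ι → Type*} [∀ i, Fintype (S i)]

lemma IsProbVec.sum_prod_eq_one [DecidableEq ι] {p : ∀ i, S i → ℝ} (hp : ∀ i, IsProbVec (p i)) :
    ∑ a : ∀ i, S i, ∏ i, p i (a i) = 1 := by
  rw [← Fintype.prod_sum]
  exact Finset.prod_eq_one fun i _ => (hp i).2

lemma IsProbVec.sum_prod_eq_marginal [DecidableEq ι] {p : ∀ i, S i → ℝ}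
    (hp : ∀ i, IsProbVec (p i)) (i : ι) (b : S i) :
    ∑ a ∈ Fintype.piFinset (Function.update (fun _ => Finset.univ) i {b}), ∏ j, p j (a j)
      = p i b := by
  rw [← Finset.prod_univ_sum, Finset.prod_eq_single i]
  · simp only [Function.update_self, Finset.sum_singleton]
  · intro j _ hj
    rw [Function.update_of_ne hj, (hp j).2]
  · exact fun hi => absurd (Finset.mem_univ i) hi

lemma IsProbVec.eq_of_prod_eq {p q : ∀ i, S i → ℝ} (hp : ∀ i, IsProbVec (p i))
    (hq : ∀ i, IsProbVec (q i)) (h : ∀ a : ∀ i, S i, ∏ i, p i (a i) = ∏ i, q i (a i)) :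
    p = q := by
  classical
  funext i b
  rw [← sum_prod_eq_marginal hp, ← sum_prod_eq_marginal hq]
  exact Finset.sum_congr rfl fun a _ => h a

end ProductMeasure

section Histories

variable {I : Type*} {A : I → Type*}

/-- The history `h` is on the path of `f`: every action in it has positive probability. The
nonvanishing of `f i h a` stands for positivity, to make sense for arbitrary real weights. -/
inductive OnPath (f : Profile I A) : List (∀ j, A j) → Prop
  | nil : OnPath f []
  | snoc {h : List (∀ j, A j)} {a : ∀ j, A j} (hh : OnPath f h) (ha : ∀ j, f j h (a j) ≠ 0) :
      OnPath f (h ++ [a])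

/-- The history `h` leaves the path of `f`, and the first joint action at which it does so is
excluded by `f` through the action of player `i` only. -/
inductive DeviatesFirst (f : Profile I A) (i : I) : List (∀ j, A j) → Prop
  | here {h : List (∀ j, A j)} {a : ∀ j, A j} (hh : OnPath f h) (hi : f i h (a i) = 0)
      (hne : ∀ j ≠ i, f j h (a j) ≠ 0) : DeviatesFirst f i (h ++ [a])
  | later {h : List (∀ j, A j)} {a : ∀ j, A j} (hh : DeviatesFirst f i h) :
      DeviatesFirst f i (h ++ [a])

lemma onPath_append_singleton {f : Profile I A} {h : List (∀ j, A j)} {a : ∀ j, A j} :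
    OnPath f (h ++ [a]) ↔ OnPath f h ∧ ∀ j, f j h (a j) ≠ 0 := by
  refine ⟨fun hha => ?_, fun ⟨hh, ha⟩ => hh.snoc ha⟩
  generalize hl : h ++ [a] = l at hha
  cases hha with
  | nil => simp at hl
  | snoc hh ha =>
    obtain ⟨rfl, hab⟩ := List.append_inj' hl rfl
    cases hab
    exact ⟨hh, ha⟩

lemma deviatesFirst_append_singleton {f : Profile I A} {i : I} {h : List (∀ j, A j)}
    {a : ∀ j, A j} :
    DeviatesFirst f i (h ++ [a]) ↔
      (OnPath f h ∧ f i h (a i) = 0 ∧ ∀ j ≠ i, f j h (a j) ≠ 0) ∨ DeviatesFirst f i h := by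
  refine ⟨fun hha => ?_, ?_⟩
  · generalize hl : h ++ [a] = l at hha
    cases hha with
    | here hh hi hne =>
      obtain ⟨rfl, hab⟩ := List.append_inj' hl rfl
      cases hab
      exact Or.inl ⟨hh, hi, hne⟩
    | later hh =>
      obtain ⟨rfl, -⟩ := List.append_inj' hl rfl
      exact Or.inr hh
  · rintro (⟨hh, hi, hne⟩ | hh)
    exacts [.here hh hi hne, .later hh]

lemma DeviatesFirst.not_onPath {f : Profile I A} {i : I} {h : List (∀ j, A j)}
    (hdev : DeviatesFirst f i h) : ¬ OnPath f h := by
  induction hdev with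
  | here _ hi _ => exact fun hon => (onPath_append_singleton.1 hon).2 i hi
  | later _ ih => exact fun hon => ih (onPath_append_singleton.1 hon).1

lemma DeviatesFirst.unique {f : Profile I A} {i k : I} {h : List (∀ j, A j)}
    (hi : DeviatesFirst f i h) (hk : DeviatesFirst f k h) : i = k := by
  induction hi with
  | here hh hi _ =>
    rcases deviatesFirst_append_singleton.1 hk with ⟨-, -, hne⟩ | hk
    · exact by_contra fun hik => hne i hik hi
    · exact absurd hh hk.not_onPath
  | later hdev ih =>
    rcases deviatesFirst_append_singleton.1 hk with ⟨hh, -, -⟩ | hk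
    · exact absurd hh hdev.not_onPath
    · exact ih hk

open Classical in
/-- The profile that follows `f` until a single player `i` deviates from it, and `F i` afterwards.
Histories first left by several players at once are irrelevant to unilateral deviations, and there
`f` is kept. -/
noncomputable def switchProfile (f : Profile I A) (F : I → Profile I A) : Profile I A :=
  fun j h => if hdev : ∃ i, DeviatesFirst f i h then F hdev.choose j h else f j h

lemma OnPath.switchProfile_eq {f : Profile I A} {h : List (∀ j, A j)} (hon : OnPath f h)
    (F : I → Profile I A) (j : I) : switchProfile f F j h = f j h :=
  dif_neg fun ⟨_, hdev⟩ => hdev.not_onPath hon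

lemma DeviatesFirst.switchProfile_eq {f : Profile I A} {i : I} {h : List (∀ j, A j)}
    (hdev : DeviatesFirst f i h) (F : I → Profile I A) (j : I) :
    switchProfile f F j h = F i j h := by
  have hex : ∃ k, DeviatesFirst f k h := ⟨i, hdev⟩
  rw [switchProfile, dif_pos hex, hex.choose_spec.unique hdev]

lemma isProfile_switchProfile [∀ i, Fintype (A i)] {f : Profile I A} {F : I → Profile I A}
    (hf : IsProfile f) (hF : ∀ i, IsProfile (F i)) : IsProfile (switchProfile f F) := by
  intro j h
  unfold switchProfile
  split_ifs with hdev
  · exact hF _ j h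
  · exact hf j h

lemma OnPath.onPath_or_deviatesFirst [DecidableEq I] {f f' : Profile I A} {i : I}
    {g : List (∀ j, A j) → A i → ℝ} {h : List (∀ j, A j)}
    (hon : OnPath (Function.update f' i g) h)
    (agree : ∀ p, p.length < h.length → OnPath f p → ∀ j, f j p = f' j p) :
    OnPath f h ∨ DeviatesFirst f i h := by
  induction hon with
  | nil => exact Or.inl .nil
  | @snoc h a _ ha ih =>
    have hlen : h.length < (h ++ [a]).length := by simp
    rcases ih fun p hp => agree p (hp.trans hlen) with hh | hdev
    · have hne : ∀ j ≠ i, f j h (a j) ≠ 0 := fun j hj => by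
        simpa only [Function.update_of_ne hj, agree h hlen hh j] using ha j
      by_cases hi : f i h (a i) = 0
      · exact Or.inr (.here hh hi hne)
      · exact Or.inl (hh.snoc fun j => if hj : j = i then hj ▸ hi else hne j hj)
    · exact Or.inr hdev.later

end Histories

section PathProbabilities

variable {I : Type*} [Fintype I] {A : I → Type*} {f f' : Profile I A}

lemma ofFn_snoc {X : Type*} {n : ℕ} (v : Fin n → X) (a : X) :
    List.ofFn (Fin.snoc v a : Fin (n + 1) → X) = List.ofFn v ++ [a] := by
  simp only [List.ofFn_succ', Fin.snoc_castSucc, Fin.snoc_last, List.concat_eq_append]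

lemma continuous_pathProb (T : ℕ) : Continuous (pathProb T : Profile I A → _) := by
  unfold pathProb
  fun_prop

lemma pathProb_snoc {n : ℕ} (f : Profile I A) (v : Fin n → ∀ j, A j) (a : ∀ j, A j) :
    pathProb (n + 1) f (Fin.snoc v a) = pathProb n f v * ∏ i, f i (List.ofFn v) (a i) := by
  have hlast : histPrefix (Fin.snoc v a : Fin (n + 1) → ∀ j, A j) (Fin.last n) = List.ofFn v := by
    refine congrArg List.ofFn (funext fun s => ?_)
    exact Fin.snoc_castSucc (α := fun _ => ∀ j, A j) a v s
  have hcast (t : Fin n) :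
      histPrefix (Fin.snoc v a : Fin (n + 1) → ∀ j, A j) t.castSucc = histPrefix v t := by
    refine congrArg List.ofFn (funext fun s => ?_)
    exact Fin.snoc_castSucc (α := fun _ => ∀ j, A j) a v (Fin.castLE t.isLt.le s)
  simp only [pathProb, Fin.prod_univ_castSucc, hlast, hcast, Fin.snoc_castSucc, Fin.snoc_last]

lemma pathProb_ne_zero_iff {n : ℕ} {v : Fin n → ∀ j, A j} :
    pathProb n f v ≠ 0 ↔ OnPath f (List.ofFn v) := by
  induction n with
  | zero => simp [pathProb, OnPath.nil]
  | succ n ih =>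
    rw [← Fin.snoc_init_self v, pathProb_snoc, ofFn_snoc, onPath_append_singleton, ← ih,
      mul_ne_zero_iff, Finset.prod_ne_zero_iff]
    simp only [Finset.mem_univ, true_imp_iff]

lemma pathProb_congr {T : ℕ}
    (agree : ∀ h, h.length < T → OnPath f h → ∀ j, f j h = f' j h) :
    pathProb T f = pathProb T f' := by
  induction T with
  | zero => rfl
  | succ n ih =>
    have hn : pathProb n f = pathProb n f' := ih fun h hh => agree h (hh.trans n.lt_succ_self)
    funext w
    rw [← Fin.snoc_init_self w, pathProb_snoc, pathProb_snoc, ← hn]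
    by_cases h0 : pathProb n f (Fin.init w) = 0
    · rw [h0, zero_mul, zero_mul]
    · simp only [agree _ (by simp) (pathProb_ne_zero_iff.1 h0)]

variable [∀ i, Fintype (A i)]

lemma IsProfile.sum_pathProb_snoc [DecidableEq I] (hf : IsProfile f) {n : ℕ}
    (v : Fin n → ∀ j, A j) :
    ∑ a : ∀ j, A j, pathProb (n + 1) f (Fin.snoc v a) = pathProb n f v := by
  simp only [pathProb_snoc, ← Finset.mul_sum, IsProbVec.sum_prod_eq_one fun i => hf i _, mul_one]

lemma pathProb_eq_of_le (hf : IsProfile f) (hf' : IsProfile f') {n T : ℕ} (hn : n ≤ T)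
    (h : pathProb T f = pathProb T f') : pathProb n f = pathProb n f' := by
  classical
  induction hn using Nat.decreasingInduction with
  | self => exact h
  | of_succ n _ ih =>
    funext v
    rw [← hf.sum_pathProb_snoc, ← hf'.sum_pathProb_snoc, ih]

lemma OnPath.eq_of_pathProb_eq (hf : IsProfile f) (hf' : IsProfile f') {T : ℕ}
    (heq : pathProb T f = pathProb T f') {h : List (∀ j, A j)} (hlen : h.length < T)
    (hon : OnPath f h) (j : I) : f j h = f' j h := by
  obtain ⟨n, v, rfl⟩ : ∃ n, ∃ v : Fin n → ∀ j, A j, h = List.ofFn v :=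
    ⟨h.length, h.get, (List.ofFn_get h).symm⟩
  rw [List.length_ofFn] at hlen
  have hn : pathProb n f = pathProb n f' := pathProb_eq_of_le hf hf' hlen.le heq
  have hprod (a : ∀ j, A j) :
      ∏ i, f i (List.ofFn v) (a i) = ∏ i, f' i (List.ofFn v) (a i) := by
    refine mul_left_cancel₀ (pathProb_ne_zero_iff.2 hon) ?_
    rw [← pathProb_snoc, pathProb_eq_of_le hf hf' hlen heq, pathProb_snoc, hn]
  exact congrFun (IsProbVec.eq_of_prod_eq (fun i => hf i _) (fun i => hf' i _) hprod) j

end PathProbabilities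

section Switching

variable {I : Type*} [Fintype I] {A : I → Type*} {f : Profile I A} {F : I → Profile I A} {T : ℕ}

lemma pathProb_switchProfile (T : ℕ) (f : Profile I A) (F : I → Profile I A) :
    pathProb T (switchProfile f F) = pathProb T f :=
  (pathProb_congr fun _ _ hon j => (hon.switchProfile_eq F j).symm).symm

variable [DecidableEq I] [∀ i, Fintype (A i)]

lemma pathProb_update_switchProfile (hf : IsProfile f) (hF : ∀ i, IsProfile (F i))
    (heq : ∀ i, pathProb T (F i) = pathProb T f) (i : I) (g : List (∀ j, A j) → A i → ℝ) :
    pathProb T (Function.update (switchProfile f F) i g)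
      = pathProb T (Function.update (F i) i g) := by
  have agree (h : List (∀ j, A j)) (hlen : h.length < T) (hon : OnPath f h) (j : I) :
      f j h = F i j h := hon.eq_of_pathProb_eq hf (hF i) (heq i).symm hlen j
  refine (pathProb_congr fun h hlen hon j => ?_).symm
  obtain rfl | hj := eq_or_ne j i
  · simp only [Function.update_self]
  · rw [Function.update_of_ne hj, Function.update_of_ne hj]
    rcases hon.onPath_or_deviatesFirst fun p hp => agree p (hp.trans hlen) with hh | hdev
    · rw [hh.switchProfile_eq, agree h hlen hh]
    · rw [hdev.switchProfile_eq]

lemma UT_congr {f' : Profile I A} (h : pathProb T f = pathProb T f')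
    (u : I → (∀ j, A j) → ℝ) (lam : I → ℝ) (i : I) :
    UT T u lam i f = UT T u lam i f' := by
  simp only [UT, h]

/-- In the `T`-period game, player `i`'s part of `f` is a `ψ`-best reply to the other players'
parts. -/
def IsBestReplyT (T : ℕ) (u : I → (∀ j, A j) → ℝ) (lam : I → ℝ) (ψ : ℝ) (i : I)
    (f : Profile I A) : Prop :=
  ∀ g : List (∀ j, A j) → A i → ℝ, (∀ h, IsProbVec (g h)) →
    UT T u lam i (Function.update f i g) - ψ ≤ UT T u lam i f

lemma isNashT_switchProfile {u : I → (∀ j, A j) → ℝ} {lam : I → ℝ} {ψ : ℝ}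
    (hf : IsProfile f) (hF : ∀ i, IsProfile (F i)) (heq : ∀ i, pathProb T (F i) = pathProb T f)
    (hbest : ∀ i, IsBestReplyT T u lam ψ i (F i)) :
    IsNashT T u lam ψ (switchProfile f F) := by
  intro i g hg
  calc UT T u lam i (Function.update (switchProfile f F) i g) - ψ
      = UT T u lam i (Function.update (F i) i g) - ψ := by
        rw [UT_congr (pathProb_update_switchProfile hf hF heq i g)]
    _ ≤ UT T u lam i (F i) := hbest i g hg
    _ = UT T u lam i (switchProfile f F) :=
        UT_congr ((heq i).trans (pathProb_switchProfile T f F).symm) u lam i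

end Switching

section WeakDistance

variable {I : Type*} [Fintype I] [DecidableEq I] {A : I → Type*} [∀ i, Fintype (A i)] {T : ℕ}
  {P Q : (Fin T → ∀ j, A j) → ℝ}

lemma dT_self (P : (Fin T → ∀ j, A j) → ℝ) : dT T P P = 0 := by
  simp [dT]

lemma dT_nonneg (P Q : (Fin T → ∀ j, A j) → ℝ) : 0 ≤ dT T P Q :=
  Finset.sum_nonneg fun _ _ =>
    mul_nonneg (by positivity) (Real.iSup_nonneg fun _ => abs_nonneg _)

lemma eq_of_dT_eq_zero (hT : 1 ≤ T) (h : dT T P Q = 0) : P = Q := by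
  obtain ⟨n, rfl⟩ := Nat.exists_eq_add_of_le' hT
  have hsup : ⨆ E : {E : Set (Fin (n + 1) → ∀ j, A j) // DependsOnFirst (n + 1) (n + 1) E},
      |(∑ w, E.1.indicator P w) - ∑ w, E.1.indicator Q w| = 0 := by
    have hterm := (Finset.sum_eq_zero_iff_of_nonneg fun t _ =>
      mul_nonneg (by positivity) (Real.iSup_nonneg fun _ => abs_nonneg _)).1 h n
        (Finset.self_mem_range_succ n)
    exact (mul_eq_zero.1 hterm).resolve_left (by positivity)
  funext w
  have hw : DependsOnFirst (n + 1) (n + 1) {w} := fun v v' hv => by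
    rw [show v = v' from funext fun s => hv s s.2]
  have hle := (le_ciSup (Set.finite_range _).bddAbove ⟨{w}, hw⟩).trans_eq hsup
  classical
  simpa [Set.indicator_apply, sub_eq_zero] using hle

lemma continuous_ciSup_of_finite {ι X L : Type*} [Finite ι] [TopologicalSpace X]
    [ConditionallyCompleteLattice L] [TopologicalSpace L] [ContinuousSup L] {φ : ι → X → L}
    (hφ : ∀ i, Continuous (φ i)) : Continuous fun x => ⨆ i, φ i x := by
  cases nonempty_fintype ι
  cases isEmpty_or_nonempty ι
  · simpa only [iSup_of_empty'] using continuous_const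
  · simp only [← Finset.sup'_univ_eq_ciSup]
    exact Continuous.finset_sup'_apply _ fun i _ => hφ i

lemma continuous_dT {X : Type*} [TopologicalSpace X] {P Q : X → (Fin T → ∀ j, A j) → ℝ}
    (hP : Continuous P) (hQ : Continuous Q) : Continuous fun x => dT T (P x) (Q x) := by
  refine continuous_finsetSum _ fun t _ => continuous_const.mul (continuous_ciSup_of_finite ?_)
  intro E
  have hprob (R : X → (Fin T → ∀ j, A j) → ℝ) (hR : Continuous R) :
      Continuous fun x => ∑ w, E.1.indicator (R x) w := by
    refine continuous_finsetSum _ fun w _ => ?_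
    by_cases hw : w ∈ E.1
    · simpa only [Set.indicator_of_mem hw] using continuous_pi_iff.1 hR w
    · simpa only [Set.indicator_of_notMem hw] using continuous_const
  exact ((hprob P hP).sub (hprob Q hQ)).abs

end WeakDistance

section Compactness

variable {I : Type*} {A : I → Type*} [∀ i, Fintype (A i)]

lemma isCompact_setOf_isProfile : IsCompact {f : Profile I A | IsProfile f} := by
  have hpi : {f : Profile I A | IsProfile f}
      = Set.univ.pi fun i => Set.univ.pi fun _ => stdSimplex ℝ (A i) := by
    ext f
    simp [IsProfile, IsProbVec, stdSimplex]
  rw [hpi]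
  exact isCompact_univ_pi fun i => isCompact_univ_pi fun _ => isCompact_stdSimplex ℝ (A i)

lemma IsProfile.update [DecidableEq I] {f : Profile I A} (hf : IsProfile f) {i : I}
    {g : List (∀ j, A j) → A i → ℝ} (hg : ∀ h, IsProbVec (g h)) :
    IsProfile (Function.update f i g) := by
  intro j
  obtain rfl | hj := eq_or_ne j i
  · simpa only [Function.update_self] using hg
  · simpa only [Function.update_of_ne hj] using hf j

variable [Fintype I] [DecidableEq I] {T : ℕ} {u : I → (∀ j, A j) → ℝ} {lam : I → ℝ} {ψ θ η : ℝ}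

lemma continuous_UT (T : ℕ) (u : I → (∀ j, A j) → ℝ) (lam : I → ℝ) (i : I) :
    Continuous fun f : Profile I A => UT T u lam i f :=
  continuous_finsetSum _ fun w _ =>
    ((continuous_apply w).comp (continuous_pathProb T)).mul continuous_const

lemma isClosed_setOf_isBestReplyT (T : ℕ) (u : I → (∀ j, A j) → ℝ) (lam : I → ℝ) (ψ : ℝ)
    (i : I) : IsClosed {f : Profile I A | IsBestReplyT T u lam ψ i f} := by
  have hU := continuous_UT T u lam i
  simp only [IsBestReplyT, Set.ofPred_forall]
  exact isClosed_iInter fun g => isClosed_iInter fun _ =>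
    isClosed_le ((hU.comp (continuous_id.update i continuous_const)).sub continuous_const) hU

lemma IsProfile.isBestReplyT {i : I} {f : Profile I A} (hf : IsProfile f)
    (hsup : UT T u lam i f ≥
      (⨆ g : {g : List (∀ j, A j) → A i → ℝ // ∀ h, IsProbVec (g h)},
        UT T u lam i (Function.update f i g.1)) - ψ) :
    IsBestReplyT T u lam ψ i f := by
  intro g hg
  have hbdd : BddAbove (Set.range fun g : {g : List (∀ j, A j) → A i → ℝ // ∀ h, IsProbVec (g h)} =>
      UT T u lam i (Function.update f i g.1)) := by
    refine (isCompact_setOf_isProfile.bddAbove_image (continuous_UT T u lam i).continuousOn).mono ?_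
    rintro _ ⟨g, rfl⟩
    exact Set.mem_image_of_mem _ (hf.update g.2)
  exact (sub_le_sub_right (le_ciSup hbdd ⟨g, hg⟩) ψ).trans hsup

/-- The pairs of a profile `f` and a family `F` of beliefs, `F i` being a `ψ`-best reply of player
`i`, such that no `ψ`-Nash equilibrium has weak distance less than `θ` from `f`. -/
def farFromNash (T : ℕ) (u : I → (∀ j, A j) → ℝ) (lam : I → ℝ) (ψ θ : ℝ) :
    Set (Profile I A × (I → Profile I A)) :=
  {x | IsProfile x.1 ∧ (∀ i, IsProfile (x.2 i) ∧ IsBestReplyT T u lam ψ i (x.2 i)) ∧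
    ∀ fhat : Profile I A, IsProfile fhat → IsNashT T u lam ψ fhat →
      θ ≤ dT T (pathProb T fhat) (pathProb T x.1)}

lemma isCompact_farFromNash (T : ℕ) (u : I → (∀ j, A j) → ℝ) (lam : I → ℝ) (ψ θ : ℝ) :
    IsCompact (farFromNash T u lam ψ θ) := by
  have hbeliefs : IsCompact
      (Set.univ.pi fun i => {f : Profile I A | IsProfile f ∧ IsBestReplyT T u lam ψ i f}) :=
    isCompact_univ_pi fun i =>
      isCompact_setOf_isProfile.inter_right (isClosed_setOf_isBestReplyT T u lam ψ i)
  have hfar : IsClosed {f : Profile I A | ∀ fhat : Profile I A, IsProfile fhat →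
      IsNashT T u lam ψ fhat → θ ≤ dT T (pathProb T fhat) (pathProb T f)} := by
    simp only [Set.ofPred_forall]
    exact isClosed_iInter fun fhat => isClosed_iInter fun _ => isClosed_iInter fun _ =>
      isClosed_le continuous_const (continuous_dT continuous_const (continuous_pathProb T))
  convert! (isCompact_setOf_isProfile.prod hbeliefs).inter_right (hfar.preimage continuous_fst)
    using 1
  ext x
  simp [farFromNash, and_assoc]

/-- The largest weak distance between the play predicted by a belief `F i` and the play generated
by `f`. -/
noncomputable def beliefError (T : ℕ) (x : Profile I A × (I → Profile I A)) : ℝ :=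
  ‖fun i => dT T (pathProb T (x.2 i)) (pathProb T x.1)‖

lemma continuous_beliefError (T : ℕ) :
    Continuous (beliefError T : Profile I A × (I → Profile I A) → ℝ) :=
  have hpath : Continuous (pathProb T : Profile I A → _) := continuous_pathProb T
  (continuous_pi fun i => continuous_dT
    (hpath.comp ((continuous_apply i).comp continuous_snd)) (hpath.comp continuous_fst)).norm

lemma beliefError_pos (hT : 1 ≤ T) (hθ : 0 < θ) {x : Profile I A × (I → Profile I A)}
    (hx : x ∈ farFromNash T u lam ψ θ) : 0 < beliefError T x := by
  obtain ⟨hf, hF, hfar⟩ := hx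
  refine norm_pos_iff.2 fun hzero => ?_
  have heq (i : I) : pathProb T (x.2 i) = pathProb T x.1 :=
    eq_of_dT_eq_zero hT (congrFun hzero i)
  have hnash : IsNashT T u lam ψ (switchProfile x.1 x.2) :=
    isNashT_switchProfile hf (fun i => (hF i).1) heq fun i => (hF i).2
  have hle := hfar _ (isProfile_switchProfile hf fun i => (hF i).1) hnash
  rw [pathProb_switchProfile, dT_self] at hle
  exact hle.not_gt hθ

lemma IsWeakSubjT.exists_beliefs (hη : 0 ≤ η) {f : Profile I A}
    (hsubj : IsWeakSubjT T u lam ψ η f) :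
    ∃ F : I → Profile I A, (∀ i, IsProfile (F i) ∧ IsBestReplyT T u lam ψ i (F i)) ∧
      beliefError T (f, F) ≤ η := by
  choose F hF _ hsup hd using hsubj
  refine ⟨F, fun i => ⟨hF i, (hF i).isBestReplyT (hsup i)⟩, (pi_norm_le_iff_of_nonneg hη).2 ?_⟩
  intro i
  rw [Real.norm_of_nonneg (dT_nonneg _ _)]
  exact hd i

theorem finite_horizon_robustness_general (T : ℕ) (hT : 1 ≤ T) (u : I → (∀ j, A j) → ℝ)
    (lam : I → ℝ) (ψ : ℝ) :
    ∀ θ > (0 : ℝ), ∃ ηbar > (0 : ℝ), ∀ η : ℝ, 0 ≤ η → η ≤ ηbar →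
      ∀ f : Profile I A, IsProfile f → IsWeakSubjT T u lam ψ η f →
        ∃ fhat : Profile I A, IsProfile fhat ∧ IsNashT T u lam ψ fhat ∧
          dT T (pathProb T fhat) (pathProb T f) ≤ θ := by
  intro θ hθ
  obtain ⟨m, hm, hmin⟩ := (isCompact_farFromNash T u lam ψ θ).exists_forall_le'
    (continuous_beliefError T).continuousOn fun _ => beliefError_pos hT hθ
  refine ⟨m / 2, half_pos hm, fun η hη hηm f hf hsubj => ?_⟩
  obtain ⟨F, hF, herr⟩ := hsubj.exists_beliefs hη
  by_contra! hfar
  have hmem : (f, F) ∈ farFromNash T u lam ψ θ :=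
    ⟨hf, hF, fun fhat hfhat hnash => (hfar fhat hfhat hnash).le⟩
  linarith [hmin _ hmem]

end Compactness

/-- **Finite-horizon robustness**: for fixed horizon, payoffs, discount factors
and `ψ > 0`, weak `ψ`-subjective `η`-equilibria with sufficiently small `η` are
weakly close (within any prescribed `θ`) to exact `ψ`-Nash equilibria of the
`T`-period game. -/
theorem finite_horizon_robustness
    (T : ℕ) (hT : 1 ≤ T)
    (u : ∀ i : I, (∀ j, A j) → ℝ) (hu : ∀ i a, u i a ∈ Set.Icc (0 : ℝ) 1)
    (lam : I → ℝ) (hlam : ∀ i, lam i ∈ Set.Ioo (0 : ℝ) 1)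
    (ψ : ℝ) (hψ : 0 < ψ) :
    ∀ θ > (0 : ℝ), ∃ ηbar > (0 : ℝ),
      ∀ η : ℝ, 0 ≤ η → η ≤ ηbar →
        ∀ f : Profile I A, IsProfile f → IsWeakSubjT T u lam ψ η f →
          ∃ fhat : Profile I A, IsProfile fhat ∧
            IsNashT T u lam ψ fhat ∧
            dT T (pathProb T fhat) (pathProb T f) ≤ θ :=
  finite_horizon_robustness_general T hT u lam ψ

end FiniteHorizon
end
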